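/- Let l_1,…,l_n and r_1,…,r_n be d-dimensional bit vectors and let ℓ ≥ 1, p ∈ {0,1}, q ≥ 0 be integers, and let G = G_{L,R,ℓ,p,q}. If no pair l_i, r_j is orthogonal, then for every 1 ≤ i ≤ n, 1 ≤ j ≤ n and every pair of vertices s ∈ P_i^L and t ∈ P_j^R, dist_G(s, t) ≤ 4ℓ − 2p + q. -/

import Mathlib

namespace GraphOV

/-- Two bit vectors (functions into `Fin 2`) are orthogonal if in every coordinate
at least one of them is `0`. -/
def Orth {d : ℕ} (a b : Fin d → Fin 2) : Prop := ∀ k, a k = 0 ∨ b k = 0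

/-- A system of internally disjoint paths joining exterior vertices from `E`:
for each path name `i : ι` we record its two endpoints and its length. -/
structure PathSys (E : Type) (ι : Type) where
  src : ι → E
  dst : ι → E
  len : ι → ℕ

namespace PathSys

variable {E ι : Type}

/-- Endpoints of zero-length paths get identified. -/
def idRel (S : PathSys E ι) (a b : E) : Prop :=
  ∃ i, S.len i = 0 ∧ S.src i = a ∧ S.dst i = b

/-- Vertices of the glued graph: exterior vertices (up to identification) together
with, for each path of length `m`, fresh interior vertices at positions `1,…,m-1`. -/
def Vert (S : PathSys E ι) : Type :=
  Quot S.idRel ⊕ Σ i : ι, {t : ℕ // 0 < t ∧ t < S.len i}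

/-- The vertex corresponding to an exterior vertex. -/
def ext (S : PathSys E ι) (a : E) : S.Vert := Sum.inl (Quot.mk _ a)

/-- The `t`-th vertex on the path named `i` (for `0 ≤ t ≤ S.len i`). -/
def pt (S : PathSys E ι) (i : ι) (t : ℕ) : S.Vert :=
  if h : 0 < t ∧ t < S.len i then Sum.inr ⟨i, t, h⟩
  else if t = 0 then S.ext (S.src i) else S.ext (S.dst i)

/-- The glued graph: consecutive vertices on each path are adjacent. -/
def graph (S : PathSys E ι) : SimpleGraph S.Vert :=
  SimpleGraph.fromRel fun a b =>
    ∃ i t, t + 1 ≤ S.len i ∧ a = S.pt i t ∧ b = S.pt i (t + 1)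

/-- The set of vertices lying on the path named `i`. -/
def onPath (S : PathSys E ι) (i : ι) : Set S.Vert :=
  {v | ∃ t ≤ S.len i, v = S.pt i t}

/-- A walk in the glued graph contains the path named `i` entirely if all vertices of
that path occur consecutively (in forward or backward order) on the walk. -/
def WalkContainsPath (S : PathSys E ι) {x y : S.Vert} (W : S.graph.Walk x y) (i : ι) : Prop :=
  ∃ a, a + S.len i ≤ W.length ∧
    ((∀ t ≤ S.len i, W.getVert (a + t) = S.pt i t) ∨
     (∀ t ≤ S.len i, W.getVert (a + t) = S.pt i (S.len i - t)))

end PathSys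

/-- The exterior vertices of the graph `G_{L,R,ℓ,p,q}`. -/
inductive Ext (n d : ℕ) : Type
  | uL : Fin n → Ext n d
  | uR : Fin n → Ext n d
  | vL : Fin n → Ext n d
  | vR : Fin n → Ext n d
  | wL : Fin d → Ext n d
  | wR : Fin d → Ext n d
  | xL : Ext n d
  | xR : Ext n d
  | yL : Ext n d
  | yR : Ext n d

/-- Names for the paths of the graph `G_{L,R,ℓ,p,q}`. -/
inductive Idx (n d : ℕ) (l r : Fin n → Fin d → Fin 2) : Type
  | uvL : Fin n → Idx n d l r
  | uvR : Fin n → Idx n d l r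
  | vxL : Fin n → Idx n d l r
  | vxR : Fin n → Idx n d l r
  | vwL : (i : Fin n) → (k : Fin d) → l i k = 1 → Idx n d l r
  | vwR : (j : Fin n) → (k : Fin d) → r j k = 1 → Idx n d l r
  | ywL : Fin d → Idx n d l r
  | ywR : Fin d → Idx n d l r
  | ww : Fin d → Idx n d l r
  | xyL : Idx n d l r
  | xyR : Idx n d l r
  | yy : Idx n d l r

/-- The path system defining the graph `G_{L,R,ℓ,p,q}`. -/
def sys (n d : ℕ) (l r : Fin n → Fin d → Fin 2) (ℓ p q : ℕ) :
    PathSys (Ext n d) (Idx n d l r) where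
  src := fun i => match i with
    | .uvL i => .uL i
    | .uvR i => .uR i
    | .vxL i => .vL i
    | .vxR i => .vR i
    | .vwL i _ _ => .vL i
    | .vwR j _ _ => .vR j
    | .ywL _ => .yL
    | .ywR _ => .yR
    | .ww k => .wL k
    | .xyL => .xL
    | .xyR => .xR
    | .yy => .yL
  dst := fun i => match i with
    | .uvL i => .vL i
    | .uvR i => .vR i
    | .vxL _ => .xL
    | .vxR _ => .xR
    | .vwL _ k _ => .wL k
    | .vwR _ k _ => .wR k
    | .ywL k => .wL k
    | .ywR k => .wR k
    | .ww k => .wR k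
    | .xyL => .yL
    | .xyR => .yR
    | .yy => .yR
  len := fun i => match i with
    | .uvL _ => ℓ - p
    | .uvR _ => ℓ - p
    | .vxL _ => ℓ
    | .vxR _ => ℓ
    | .vwL _ _ _ => ℓ
    | .vwR _ _ _ => ℓ
    | .ywL _ => ℓ
    | .ywR _ => ℓ
    | .ww _ => q
    | .xyL => ℓ - p
    | .xyR => ℓ - p
    | .yy => p + q

/-- The set `P_i^L`. -/
def PL (n d : ℕ) (l r : Fin n → Fin d → Fin 2) (ℓ p q : ℕ) (i : Fin n) :
    Set (sys n d l r ℓ p q).Vert :=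
  (sys n d l r ℓ p q).onPath (.uvL i) ∪
    ((sys n d l r ℓ p q).onPath (.vxL i) \ {(sys n d l r ℓ p q).ext .xL}) ∪
    ⋃ (k : Fin d) (h : l i k = 1),
      ((sys n d l r ℓ p q).onPath (.vwL i k h) \ {(sys n d l r ℓ p q).ext (.wL k)})

/-- The set `P_j^R`. -/
def PR (n d : ℕ) (l r : Fin n → Fin d → Fin 2) (ℓ p q : ℕ) (j : Fin n) :
    Set (sys n d l r ℓ p q).Vert :=
  (sys n d l r ℓ p q).onPath (.uvR j) ∪
    ((sys n d l r ℓ p q).onPath (.vxR j) \ {(sys n d l r ℓ p q).ext .xR}) ∪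
    ⋃ (k : Fin d) (h : r j k = 1),
      ((sys n d l r ℓ p q).onPath (.vwR j k h) \ {(sys n d l r ℓ p q).ext (.wR k)})

/-- The set `V^L`. -/
def VL (n d : ℕ) (l r : Fin n → Fin d → Fin 2) (ℓ p q : ℕ) :
    Set (sys n d l r ℓ p q).Vert := ⋃ i : Fin n, PL n d l r ℓ p q i

/-- The set `V^R`. -/
def VR (n d : ℕ) (l r : Fin n → Fin d → Fin 2) (ℓ p q : ℕ) :
    Set (sys n d l r ℓ p q).Vert := ⋃ j : Fin n, PR n d l r ℓ p q j

/-- The set `V^M` of all remaining vertices. -/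
def VM (n d : ℕ) (l r : Fin n → Fin d → Fin 2) (ℓ p q : ℕ) :
    Set (sys n d l r ℓ p q).Vert := (VL n d l r ℓ p q ∪ VR n d l r ℓ p q)ᶜ

/-! Every vertex of `P_i^L` is within `ℓ - p` of `v_i^L`: the path to `u_i^L` has that length, and
on the paths of length `ℓ` leaving `v_i^L` the far end is excluded, which leaves distance at most
`ℓ - 1 ≤ ℓ - p`. The same holds on the right. A coordinate `k` with `l_i[k] = r_j[k] = 1` opens
the route `v_i^L – w_k^L – w_k^R – v_j^R` of length `2ℓ + q`, and the triangle inequality adds up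
the three parts. The distances are bounded as `edist`, which is `⊤` (where `dist` is `0`) between
vertices in different components, so that the bounds include reachability. -/

theorem edist_triangle4 {V : Type*} (G : SimpleGraph V) (a b c d : V) :
    G.edist a d ≤ G.edist a b + G.edist b c + G.edist c d := by
  calc G.edist a d
      ≤ G.edist a c + G.edist c d := SimpleGraph.edist_triangle
    _ ≤ G.edist a b + G.edist b c + G.edist c d := by
      gcongr
      exact SimpleGraph.edist_triangle

namespace PathSys

variable {E ι : Type} (S : PathSys E ι) (i : ι)

theorem pt_zero : S.pt i 0 = S.ext (S.src i) := by
  simp [pt]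

theorem pt_len : S.pt i (S.len i) = S.ext (S.dst i) := by
  by_cases h : S.len i = 0
  · rw [h, pt_zero]
    exact congrArg Sum.inl (Quot.sound ⟨i, h, rfl, rfl⟩)
  · simp [pt, h]

theorem edist_pt_succ_le {t : ℕ} (ht : t + 1 ≤ S.len i) :
    S.graph.edist (S.pt i t) (S.pt i (t + 1)) ≤ 1 := by
  -- The two points coincide when a path of length one has identified endpoints.
  by_cases h : S.pt i t = S.pt i (t + 1)
  · simp [← h]
  · have hadj : S.graph.Adj (S.pt i t) (S.pt i (t + 1)) :=
      (SimpleGraph.fromRel_adj _ _ _).2 ⟨h, .inl ⟨i, t, ht, rfl, rfl⟩⟩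
    exact (SimpleGraph.edist_eq_one_iff_adj.2 hadj).le

theorem edist_pt_add_le {t k : ℕ} (h : t + k ≤ S.len i) :
    S.graph.edist (S.pt i t) (S.pt i (t + k)) ≤ k := by
  induction k with
  | zero => simp
  | succ k ih =>
    calc S.graph.edist (S.pt i t) (S.pt i (t + k + 1))
        ≤ S.graph.edist (S.pt i t) (S.pt i (t + k))
          + S.graph.edist (S.pt i (t + k)) (S.pt i (t + k + 1)) := SimpleGraph.edist_triangle
      _ ≤ k + 1 := add_le_add (ih (by lia)) (S.edist_pt_succ_le i h)
      _ = (k + 1 : ℕ) := by push_cast; rfl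

theorem edist_src_pt_le {t : ℕ} (ht : t ≤ S.len i) :
    S.graph.edist (S.ext (S.src i)) (S.pt i t) ≤ t := by
  simpa [pt_zero] using S.edist_pt_add_le i (t := 0) (k := t) (by lia)

theorem edist_pt_dst_le {t : ℕ} (ht : t ≤ S.len i) :
    S.graph.edist (S.pt i t) (S.ext (S.dst i)) ≤ (S.len i - t : ℕ) := by
  simpa [Nat.add_sub_cancel' ht, pt_len] using
    S.edist_pt_add_le i (t := t) (k := S.len i - t) (by lia)

theorem edist_src_dst_le : S.graph.edist (S.ext (S.src i)) (S.ext (S.dst i)) ≤ S.len i := by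
  simpa [pt_len] using S.edist_src_pt_le i le_rfl

variable {S i} {v : S.Vert}

theorem edist_dst_le_of_mem_onPath (hv : v ∈ S.onPath i) :
    S.graph.edist v (S.ext (S.dst i)) ≤ S.len i := by
  obtain ⟨t, ht, rfl⟩ := hv
  exact (S.edist_pt_dst_le i ht).trans (Nat.mono_cast (Nat.sub_le _ _))

theorem edist_src_le_of_mem_onPath_diff_dst (hv : v ∈ S.onPath i \ {S.ext (S.dst i)}) :
    S.graph.edist v (S.ext (S.src i)) ≤ (S.len i - 1 : ℕ) := by
  obtain ⟨⟨t, ht, rfl⟩, hne⟩ := hv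
  have ht_ne : t ≠ S.len i := by
    rintro rfl
    exact hne (S.pt_len i)
  rw [SimpleGraph.edist_comm]
  exact (S.edist_src_pt_le i ht).trans (Nat.mono_cast (by lia))

end PathSys

theorem not_orth_iff {d : ℕ} {a b : Fin d → Fin 2} : ¬ Orth a b ↔ ∃ k, a k = 1 ∧ b k = 1 := by
  have eq_one_iff_ne_zero (x : Fin 2) : x = 1 ↔ x ≠ 0 := by lia
  simp [Orth, eq_one_iff_ne_zero]

section

variable {n d ℓ p q : ℕ} {l r : Fin n → Fin d → Fin 2} {i j : Fin n}
  {s t : (sys n d l r ℓ p q).Vert}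

theorem edist_vL_le_of_mem_PL (hp : p ≤ 1) (hs : s ∈ PL n d l r ℓ p q i) :
    (sys n d l r ℓ p q).graph.edist s ((sys n d l r ℓ p q).ext (.vL i)) ≤ (ℓ - p : ℕ) := by
  have hle : ((ℓ - 1 : ℕ) : ℕ∞) ≤ (ℓ - p : ℕ) := Nat.mono_cast (Nat.sub_le_sub_left hp ℓ)
  simp only [PL, Set.mem_union, Set.mem_iUnion] at hs
  obtain (huv | hvx) | ⟨k, hk, hvw⟩ := hs
  · exact PathSys.edist_dst_le_of_mem_onPath huv
  · exact (PathSys.edist_src_le_of_mem_onPath_diff_dst hvx).trans hle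
  · exact (PathSys.edist_src_le_of_mem_onPath_diff_dst hvw).trans hle

theorem edist_vR_le_of_mem_PR (hp : p ≤ 1) (ht : t ∈ PR n d l r ℓ p q j) :
    (sys n d l r ℓ p q).graph.edist t ((sys n d l r ℓ p q).ext (.vR j)) ≤ (ℓ - p : ℕ) := by
  have hle : ((ℓ - 1 : ℕ) : ℕ∞) ≤ (ℓ - p : ℕ) := Nat.mono_cast (Nat.sub_le_sub_left hp ℓ)
  simp only [PR, Set.mem_union, Set.mem_iUnion] at ht
  obtain (huv | hvx) | ⟨k, hk, hvw⟩ := ht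
  · exact PathSys.edist_dst_le_of_mem_onPath huv
  · exact (PathSys.edist_src_le_of_mem_onPath_diff_dst hvx).trans hle
  · exact (PathSys.edist_src_le_of_mem_onPath_diff_dst hvw).trans hle

theorem edist_vL_vR_le_of_not_orth (h : ¬ Orth (l i) (r j)) :
    (sys n d l r ℓ p q).graph.edist ((sys n d l r ℓ p q).ext (.vL i))
      ((sys n d l r ℓ p q).ext (.vR j)) ≤ (2 * ℓ + q : ℕ) := by
  obtain ⟨k, hl, hr⟩ := not_orth_iff.1 h
  let S := sys n d l r ℓ p q
  have hvL_wL : S.graph.edist (S.ext (.vL i)) (S.ext (.wL k)) ≤ ℓ :=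
    S.edist_src_dst_le (.vwL i k hl)
  have hwL_wR : S.graph.edist (S.ext (.wL k)) (S.ext (.wR k)) ≤ q :=
    S.edist_src_dst_le (.ww k)
  have hwR_vR : S.graph.edist (S.ext (.wR k)) (S.ext (.vR j)) ≤ ℓ :=
    SimpleGraph.edist_comm.trans_le (S.edist_src_dst_le (.vwR j k hr))
  calc S.graph.edist (S.ext (.vL i)) (S.ext (.vR j))
      ≤ S.graph.edist (S.ext (.vL i)) (S.ext (.wL k))
        + S.graph.edist (S.ext (.wL k)) (S.ext (.wR k))
        + S.graph.edist (S.ext (.wR k)) (S.ext (.vR j)) := edist_triangle4 _ _ _ _ _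
    _ ≤ ℓ + q + ℓ := by gcongr
    _ = (2 * ℓ + q : ℕ) := by push_cast; ring

theorem dist_left_right_no_orth_general (hℓ : 1 ≤ ℓ) (hp : p ≤ 1) (h : ¬ Orth (l i) (r j))
    (hs : s ∈ PL n d l r ℓ p q i) (ht : t ∈ PR n d l r ℓ p q j) :
    (sys n d l r ℓ p q).graph.edist s t ≤ (4 * ℓ - 2 * p + q : ℕ) := by
  let S := sys n d l r ℓ p q
  have hsum : (ℓ - p) + (2 * ℓ + q) + (ℓ - p) = 4 * ℓ - 2 * p + q := by
    have hpℓ : p ≤ ℓ := hp.trans hℓ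
    omega
  calc S.graph.edist s t
      ≤ S.graph.edist s (S.ext (.vL i)) + S.graph.edist (S.ext (.vL i)) (S.ext (.vR j))
        + S.graph.edist (S.ext (.vR j)) t := edist_triangle4 _ _ _ _ _
    _ ≤ (ℓ - p : ℕ) + (2 * ℓ + q : ℕ) + (ℓ - p : ℕ) := by
      gcongr
      · exact edist_vL_le_of_mem_PL hp hs
      · exact edist_vL_vR_le_of_not_orth h
      · exact SimpleGraph.edist_comm.trans_le (edist_vR_le_of_mem_PR hp ht)
    _ = (4 * ℓ - 2 * p + q : ℕ) := by rw [← hsum, ← Nat.cast_add, ← Nat.cast_add]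

end

theorem dist_left_right_no_orth (n d ℓ p q : ℕ) (hn : 1 ≤ n) (hd : 1 ≤ d) (hℓ : 1 ≤ ℓ)
    (hp : p ≤ 1) (l r : Fin n → Fin d → Fin 2) (hno : ∀ i j, ¬ Orth (l i) (r j)) :
    ∀ (i j : Fin n), ∀ s ∈ PL n d l r ℓ p q i, ∀ t ∈ PR n d l r ℓ p q j,
      (sys n d l r ℓ p q).graph.dist s t ≤ 4 * ℓ - 2 * p + q := by
  intro i j s hs t ht
  exact ENat.toNat_le_of_le_natCast (dist_left_right_no_orth_general hℓ hp (hno i j) hs ht)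

end GraphOV
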